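/- Let L be a finite-dimensional Leibniz algebra and B a subalgebra. B is a weak c-ideal of L if and only if B/B_L has a subideal complement in L/B_L, i.e., there is a subideal C' of L/B_L with L/B_L = B/B_L + C' and (B/B_L) ∩ C' = 0. -/

import Mathlib

/-!
Write `A = B_L` and let `π : L → L/A` be the projection. Images and preimages under `π` preserve
the relation "ideal of", hence carry chains of successive ideals to such chains; as
`π(L) = L/A` and `π⁻¹(L/A) = L`, they carry subideals to subideals. Because `A ≤ B`, a subideal `C`
of `L` with `L = B + C` and `B ∩ C ≤ A` yields the complement `π(C)` of `π(B)`, and conversely a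
subideal complement `C'` of `π(B)` yields `π⁻¹(C')`.
-/

open Submodule

variable {F : Type*} [Field F] {L : Type*} [AddCommGroup L] [Module F L]

/-- `br` is a (right) Leibniz bracket: the right multiplications are derivations. -/
def IsLeibnizBracket (br : L →ₗ[F] L →ₗ[F] L) : Prop :=
  ∀ x y z : L, br x (br y z) = br (br x y) z - br (br x z) y

/-- A symmetric Leibniz bracket: right and left Leibniz, and `[[x,y],[x,y]] = 0`. -/
def IsSymmetricLeibnizBracket (br : L →ₗ[F] L →ₗ[F] L) : Prop :=
  IsLeibnizBracket br ∧
  (∀ x y z : L, br x (br y z) = br (br x y) z + br y (br x z)) ∧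
  (∀ x y : L, br (br x y) (br x y) = 0)

/-- `B` is a subalgebra (a submodule closed under the bracket). -/
def IsSubalg (br : L →ₗ[F] L →ₗ[F] L) (B : Submodule F L) : Prop :=
  ∀ x ∈ B, ∀ y ∈ B, br x y ∈ B

/-- `A` is an ideal of the subalgebra `B`. -/
def IsIdealOf (br : L →ₗ[F] L →ₗ[F] L) (A B : Submodule F L) : Prop :=
  A ≤ B ∧ ∀ x ∈ A, ∀ y ∈ B, br x y ∈ A ∧ br y x ∈ A

/-- `A` is an ideal of `L`. -/
def IsLeibIdeal (br : L →ₗ[F] L →ₗ[F] L) (A : Submodule F L) : Prop :=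
  IsIdealOf br A ⊤

/-- `C` is a subideal of the subalgebra `K`: there is a chain
`C = C_0 ⊆ C_1 ⊆ ... ⊆ C_n = K` with each term an ideal of the next. -/
def IsSubidealOf (br : L →ₗ[F] L →ₗ[F] L) (C K : Submodule F L) : Prop :=
  ∃ (n : ℕ) (ch : ℕ → Submodule F L), ch 0 = C ∧ ch n = K ∧
    ∀ i < n, IsIdealOf br (ch i) (ch (i + 1))

/-- `C` is a subideal of `L`. -/
def IsSubideal (br : L →ₗ[F] L →ₗ[F] L) (C : Submodule F L) : Prop :=
  IsSubidealOf br C ⊤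

/-- The core of `B` in the subalgebra `K`: the largest ideal of `K` contained in `B`. -/
def leibCoreIn (br : L →ₗ[F] L →ₗ[F] L) (K B : Submodule F L) : Submodule F L :=
  sSup {A | IsIdealOf br A K ∧ A ≤ B}

/-- `B_L`, the largest ideal of `L` contained in `B`. -/
def leibCore (br : L →ₗ[F] L →ₗ[F] L) (B : Submodule F L) : Submodule F L :=
  leibCoreIn br ⊤ B

/-- `B` is a c-ideal of `L`. -/
def IsCIdeal (br : L →ₗ[F] L →ₗ[F] L) (B : Submodule F L) : Prop :=
  IsSubalg br B ∧ ∃ K, IsLeibIdeal br K ∧ B ⊔ K = ⊤ ∧ B ⊓ K ≤ leibCore br B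

/-- `B` is a weak c-ideal of the subalgebra `K`. -/
def IsWeakCIdealOf (br : L →ₗ[F] L →ₗ[F] L) (B K : Submodule F L) : Prop :=
  IsSubalg br B ∧ B ≤ K ∧
    ∃ C, IsSubidealOf br C K ∧ B ⊔ C = K ∧ B ⊓ C ≤ leibCoreIn br K B

/-- `B` is a weak c-ideal of `L`. -/
def IsWeakCIdeal (br : L →ₗ[F] L →ₗ[F] L) (B : Submodule F L) : Prop :=
  IsWeakCIdealOf br B ⊤

/-- The Leibniz kernel `I`, spanned by all squares. -/
def leibnizKernel (br : L →ₗ[F] L →ₗ[F] L) : Submodule F L :=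
  Submodule.span F {y | ∃ x : L, y = br x x}

/-- The span of all brackets `[a,b]` with `a ∈ A`, `b ∈ B`. -/
def brSpan (br : L →ₗ[F] L →ₗ[F] L) (A B : Submodule F L) : Submodule F L :=
  Submodule.span F {z | ∃ x ∈ A, ∃ y ∈ B, z = br x y}

/-- The derived series of the subalgebra `U`. -/
def derSeriesOf (br : L →ₗ[F] L →ₗ[F] L) (U : Submodule F L) : ℕ → Submodule F L
  | 0 => U
  | n + 1 => brSpan br (derSeriesOf br U n) (derSeriesOf br U n)

/-- The subalgebra `U` is solvable. -/
def IsSolvableSub (br : L →ₗ[F] L →ₗ[F] L) (U : Submodule F L) : Prop :=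
  ∃ n, derSeriesOf br U n = ⊥

/-- The lower central series of the subalgebra `U`. -/
def lcsOf (br : L →ₗ[F] L →ₗ[F] L) (U : Submodule F L) : ℕ → Submodule F L
  | 0 => U
  | n + 1 => brSpan br (lcsOf br U n) U

/-- The subalgebra `U` is nilpotent. -/
def IsNilpotentSub (br : L →ₗ[F] L →ₗ[F] L) (U : Submodule F L) : Prop :=
  ∃ n, lcsOf br U n = ⊥

/-- `M` is a maximal (proper) subalgebra of the subalgebra `U`. -/
def IsMaximalSubalgOf (br : L →ₗ[F] L →ₗ[F] L) (M U : Submodule F L) : Prop :=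
  IsSubalg br M ∧ M < U ∧ ∀ K, IsSubalg br K → M ≤ K → K ≤ U → K = M ∨ K = U

/-- `M` is a maximal subalgebra of `L`. -/
def IsMaximalSubalg (br : L →ₗ[F] L →ₗ[F] L) (M : Submodule F L) : Prop :=
  IsMaximalSubalgOf br M ⊤

/-- `U` is a maximal nilpotent subalgebra of `L`. -/
def IsMaximalNilpotentSub (br : L →ₗ[F] L →ₗ[F] L) (U : Submodule F L) : Prop :=
  IsSubalg br U ∧ IsNilpotentSub br U ∧
    ∀ V, IsSubalg br V → IsNilpotentSub br V → U ≤ V → V = U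

/-- `H` is a Cartan subalgebra of the subalgebra `S`: a nilpotent subalgebra
that is self-normalizing in `S`. -/
def IsCartanSubalgOf (br : L →ₗ[F] L →ₗ[F] L) (H S : Submodule F L) : Prop :=
  IsSubalg br H ∧ H ≤ S ∧ IsNilpotentSub br H ∧
    ∀ x ∈ S, (∀ c ∈ H, br x c ∈ H ∧ br c x ∈ H) → x ∈ H

/-- `H` is a Cartan subalgebra of `L`. -/
def IsCartanSubalg (br : L →ₗ[F] L →ₗ[F] L) (H : Submodule F L) : Prop :=
  IsCartanSubalgOf br H ⊤

/-- The Frattini subalgebra of the subalgebra `C`: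
the intersection of the maximal subalgebras of `C`. -/
def frattiniIn (br : L →ₗ[F] L →ₗ[F] L) (C : Submodule F L) : Submodule F L :=
  sInf {M | IsMaximalSubalgOf br M C}

/-- The Frattini subalgebra `F(L)`. -/
def frattiniSubalg (br : L →ₗ[F] L →ₗ[F] L) : Submodule F L :=
  frattiniIn br ⊤

/-- The Frattini ideal `φ(L)`. -/
def frattiniIdeal (br : L →ₗ[F] L →ₗ[F] L) : Submodule F L :=
  leibCore br (frattiniSubalg br)

/-- `L` is supersolvable: there is a chain of ideals of `L` from `0` to `L`
each of codimension one in the next. -/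
def IsSupersolvable (br : L →ₗ[F] L →ₗ[F] L) : Prop :=
  ∃ (n : ℕ) (ch : ℕ → Submodule F L), ch 0 = ⊥ ∧ ch n = ⊤ ∧
    (∀ i ≤ n, IsLeibIdeal br (ch i)) ∧
    ∀ i < n, ch i ≤ ch (i + 1) ∧
      Module.finrank F (ch (i + 1)) = Module.finrank F (ch i) + 1

/-- A subalgebra is abelian if all brackets of its elements vanish. -/
def IsAbelianSub (br : L →ₗ[F] L →ₗ[F] L) (A : Submodule F L) : Prop :=
  ∀ x ∈ A, ∀ y ∈ A, br x y = 0

/-- `A` is a minimal abelian ideal of `L`. -/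
def IsMinimalAbelianIdeal (br : L →ₗ[F] L →ₗ[F] L) (A : Submodule F L) : Prop :=
  IsLeibIdeal br A ∧ A ≠ ⊥ ∧ IsAbelianSub br A ∧
    ∀ A', IsLeibIdeal br A' → A' ≤ A → A' = ⊥ ∨ A' = A

/-- The abelian socle `Asoc(L)`: the sum of the minimal abelian ideals of `L`. -/
def abelianSocle (br : L →ₗ[F] L →ₗ[F] L) : Submodule F L :=
  sSup {A | IsMinimalAbelianIdeal br A}

theorem isLeibIdeal_sSup (br : L →ₗ[F] L →ₗ[F] L) (S : Set (Submodule F L))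
    (h : ∀ A ∈ S, IsLeibIdeal br A) : IsLeibIdeal br (sSup S) := by
  refine ⟨le_top, fun x hx y _ => ?_⟩
  let P : Submodule F L :=
    { carrier := {a | br a y ∈ sSup S ∧ br y a ∈ sSup S}
      zero_mem' := by simp
      add_mem' := by
        rintro a b ⟨ha1, ha2⟩ ⟨hb1, hb2⟩
        constructor
        · simpa [map_add, LinearMap.add_apply] using add_mem ha1 hb1
        · simpa [map_add] using add_mem ha2 hb2
      smul_mem' := by
        rintro c a ⟨ha1, ha2⟩
        constructor
        · simpa [map_smul, LinearMap.smul_apply] using smul_mem _ c ha1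
        · simpa [map_smul] using smul_mem _ c ha2 }
  have hP : sSup S ≤ P := by
    refine sSup_le fun A hA a ha => ?_
    exact ⟨le_sSup hA ((h A hA).2 a ha y trivial).1,
           le_sSup hA ((h A hA).2 a ha y trivial).2⟩
  exact hP hx

theorem leibCore_isIdeal (br : L →ₗ[F] L →ₗ[F] L) (B : Submodule F L) :
    IsLeibIdeal br (leibCore br B) :=
  isLeibIdeal_sSup br _ fun _ hA => hA.1

/-- The bracket induced on the quotient of `L` by an ideal `A`. -/
def quotBr (br : L →ₗ[F] L →ₗ[F] L) (A : Submodule F L) (hA : IsLeibIdeal br A) :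
    (L ⧸ A) →ₗ[F] (L ⧸ A) →ₗ[F] (L ⧸ A) :=
  Submodule.liftQ A
    { toFun := fun x => Submodule.liftQ A (A.mkQ.comp (br x))
        (fun a ha => by
          simp only [LinearMap.mem_ker, LinearMap.comp_apply, Submodule.mkQ_apply,
            Submodule.Quotient.mk_eq_zero]
          exact (hA.2 a ha x trivial).2)
      map_add' := fun x y => by
        apply Submodule.linearMap_qext
        ext z
        simp [map_add]
      map_smul' := fun c x => by
        apply Submodule.linearMap_qext
        ext z
        simp [map_smul] }
    (fun a ha => by
      simp only [LinearMap.mem_ker]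
      apply Submodule.linearMap_qext
      ext z
      simp only [LinearMap.coe_mk, AddHom.coe_mk, LinearMap.comp_apply, Submodule.mkQ_apply,
        Submodule.liftQ_apply, LinearMap.zero_comp, LinearMap.zero_apply,
        Submodule.Quotient.mk_eq_zero]
      exact (hA.2 a ha z trivial).1)

theorem leibCore_le (br : L →ₗ[F] L →ₗ[F] L) (B : Submodule F L) : leibCore br B ≤ B :=
  sSup_le fun _ hA => hA.2

theorem quotBr_mkQ (br : L →ₗ[F] L →ₗ[F] L) (A : Submodule F L) (hA : IsLeibIdeal br A)
    (x y : L) : quotBr br A hA (A.mkQ x) (A.mkQ y) = A.mkQ (br x y) :=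
  rfl

theorem IsSubideal.map_mkQ {br : L →ₗ[F] L →ₗ[F] L} {A : Submodule F L} (hA : IsLeibIdeal br A)
    {C : Submodule F L} (hC : IsSubideal br C) : IsSubideal (quotBr br A hA) (C.map A.mkQ) := by
  obtain ⟨n, ch, h0, hn, h⟩ := hC
  refine ⟨n, fun i => (ch i).map A.mkQ, by simp [h0], by simp [hn], fun i hi => ?_⟩
  refine ⟨Submodule.map_mono (h i hi).1, ?_⟩
  rintro _ ⟨x, hx, rfl⟩ _ ⟨y, hy, rfl⟩
  rw [quotBr_mkQ, quotBr_mkQ]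
  exact ⟨Submodule.mem_map_of_mem ((h i hi).2 x hx y hy).1,
    Submodule.mem_map_of_mem ((h i hi).2 x hx y hy).2⟩

theorem IsSubideal.comap_mkQ {br : L →ₗ[F] L →ₗ[F] L} {A : Submodule F L} (hA : IsLeibIdeal br A)
    {C' : Submodule F (L ⧸ A)} (hC : IsSubideal (quotBr br A hA) C') :
    IsSubideal br (C'.comap A.mkQ) := by
  obtain ⟨n, ch, h0, hn, h⟩ := hC
  refine ⟨n, fun i => (ch i).comap A.mkQ, by simp [h0], by simp [hn], fun i hi => ?_⟩
  exact ⟨Submodule.comap_mono (h i hi).1, fun x hx y hy => (h i hi).2 _ hx _ hy⟩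

/-- `B` is a weak c-ideal of `L` iff `B/B_L` has a subideal
complement in `L/B_L`. -/
theorem weakCIdeal_iff_subideal_complement (br : L →ₗ[F] L →ₗ[F] L)
    (hbr : IsLeibnizBracket br) [FiniteDimensional F L]
    (B : Submodule F L) (hB : IsSubalg br B) :
    IsWeakCIdeal br B ↔
      ∃ C' : Submodule F (L ⧸ leibCore br B),
        IsSubideal (quotBr br (leibCore br B) (leibCore_isIdeal br B)) C' ∧
        B.map (leibCore br B).mkQ ⊔ C' = ⊤ ∧
        B.map (leibCore br B).mkQ ⊓ C' = ⊥ := by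
  have hAB := leibCore_le br B
  constructor
  · rintro ⟨-, -, C, hC, hsup, hinf⟩
    refine ⟨C.map (leibCore br B).mkQ, IsSubideal.map_mkQ _ hC, ?_, ?_⟩
    · rw [← Submodule.map_sup, hsup, Submodule.map_top, Submodule.range_mkQ]
    · rw [eq_bot_iff]
      rintro _ ⟨⟨b, hb, rfl⟩, c, hc, hcb⟩
      -- `c` and `b` agree modulo the core, which lies in `B`, so `c` itself lies in `B`.
      have hcbA : c - b ∈ leibCore br B := (Submodule.Quotient.eq _).1 hcb
      have hcB : c ∈ B := by simpa using add_mem (hAB hcbA) hb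
      rw [← hcb]
      exact (Submodule.Quotient.mk_eq_zero _).2 (hinf ⟨hcB, hc⟩)
  · rintro ⟨C', hC, hsup, hinf⟩
    refine ⟨hB, le_top, C'.comap (leibCore br B).mkQ, hC.comap_mkQ, ?_, ?_⟩
    · rw [eq_top_iff]
      intro l _
      have hl : (leibCore br B).mkQ l ∈ B.map (leibCore br B).mkQ ⊔ C' := hsup ▸ trivial
      obtain ⟨_, ⟨b, hb, rfl⟩, c, hc, hbc⟩ := Submodule.mem_sup.1 hl
      refine Submodule.mem_sup.2 ⟨b, hb, l - b, ?_, by abel⟩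
      rw [Submodule.mem_comap, map_sub, ← hbc, add_sub_cancel_left]
      exact hc
    · rintro x ⟨hxB, hxC⟩
      have hx : (leibCore br B).mkQ x ∈ B.map (leibCore br B).mkQ ⊓ C' :=
        ⟨Submodule.mem_map_of_mem hxB, hxC⟩
      rw [hinf] at hx
      exact (Submodule.Quotient.mk_eq_zero _).1 hx
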